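/- There exists a constant c such that for every natural number n, every binary string x of length at most n, and every finite nonempty set S of binary strings with x ∈ S, C(S) ≤ n, and |S| ≤ 2^n, one has |δ(x|S) − d(x|S) − C(S|x)| ≤ c·log(n+2); in particular, the optimality deficiency exceeds the randomness deficiency by C(S|x), up to O(log n). -/

import Mathlib

open scoped Classical

/-- Binary strings: finite sequences over `{0,1}`. -/
abbrev BStr := List Bool

/-- Complexity of `x` with respect to the description method `D`:
the minimal length of a `p` with `D(p) = x`, as an extended natural
(`⊤` if no such `p` exists). -/
noncomputable def Cw (D : BStr →. BStr) (x : BStr) : ℕ∞ :=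
  ⨅ (p : BStr) (_ : x ∈ D p), (p.length : ℕ∞)

/-- A description method is optimal if it is partial computable and gives
complexity at most that of any other partial computable description method,
up to an additive constant. -/
def OptimalDM (D : BStr →. BStr) : Prop :=
  Partrec D ∧ ∀ D' : BStr →. BStr, Partrec D' →
    ∃ c : ℕ, ∀ x : BStr, Cw D x ≤ Cw D' x + (c : ℕ∞)

/-- Plain Kolmogorov complexity (finite value) w.r.t. a description method. -/
noncomputable def C (D : BStr →. BStr) (x : BStr) : ℕ := (Cw D x).toNat

/-- Conditional complexity of `x` given `y` w.r.t. the conditional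
description method `E`. -/
noncomputable def CwCond (E : BStr → BStr →. BStr) (x y : BStr) : ℕ∞ :=
  ⨅ (p : BStr) (_ : x ∈ E p y), (p.length : ℕ∞)

/-- Optimal conditional description method. -/
def OptimalCDM (E : BStr → BStr →. BStr) : Prop :=
  Partrec₂ E ∧ ∀ E' : BStr → BStr →. BStr, Partrec₂ E' →
    ∃ c : ℕ, ∀ x y : BStr, CwCond E x y ≤ CwCond E' x y + (c : ℕ∞)

/-- Conditional Kolmogorov complexity (finite value). -/
noncomputable def Ccond (E : BStr → BStr →. BStr) (x y : BStr) : ℕ :=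
  (CwCond E x y).toNat

/-- `enc` is a computable injective encoding of finite sets of binary strings
as binary strings (computability is expressed on the level of lists of
elements, since every finite set is the set of members of a list). -/
def SetEncoding (enc : Finset BStr → BStr) : Prop :=
  Function.Injective enc ∧ Computable (fun l : List BStr => enc l.toFinset)

/-- A computable step-counting semantics for the description method `D`:
`ev t p` is the output of `D` on program `p` within `t` computation steps
(`none` if the computation has not converged within `t` steps). -/
structure TimedDM (D : BStr →. BStr) where
  ev : ℕ → BStr → Option BStr
  computable : Computable₂ ev
  mono : ∀ {t t' : ℕ} {p y : BStr}, t ≤ t' → ev t p = some y → ev t' p = some y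
  spec : ∀ p y : BStr, y ∈ D p ↔ ∃ t : ℕ, ev t p = some y

/-- Time-bounded complexity `C^t(x)`: the minimal length of a program
producing `x` within `t` steps (`⊤` if there is none). -/
noncomputable def Cwt (ev : ℕ → BStr → Option BStr) (t : ℕ) (x : BStr) : ℕ∞ :=
  ⨅ (p : BStr) (_ : ev t p = some x), (p.length : ℕ∞)

/-- `B D k`: the largest natural number whose binary representation has
complexity at most `k` (naturals are identified with their binary
representations via `Nat.bits`). -/
noncomputable def B (D : BStr →. BStr) (k : ℕ) : ℕ :=
  sSup {m : ℕ | Cw D (Nat.bits m) ≤ (k : ℕ∞)}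

/-- Kolmogorov's `(α,β)`-stochasticity: `x` belongs to a finite set `S` of
complexity at most `α` in which it is random up to `β`. -/
def Stochastic (D : BStr →. BStr) (enc : Finset BStr → BStr)
    (α β : ℕ) (x : BStr) : Prop :=
  ∃ S : Finset BStr, x ∈ S ∧ C D (enc S) ≤ α ∧
    Real.logb 2 S.card - β ≤ (C D x : ℝ)

/-- The binary entropy function (with the convention `H(0) = H(1) = 0`,
which holds automatically since `logb 2 0 = 0` in Mathlib). -/
noncomputable def binH (p : ℝ) : ℝ :=
  -(p * Real.logb 2 p) - (1 - p) * Real.logb 2 (1 - p)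

/-!
Expanding the two deficiencies turns `δ(x|S) - d(x|S) - C(S|x)` into
`(C(S) + C(x|S)) - (C(x) + C(S|x))`, so the theorem is the Kolmogorov–Levin symmetry of information.

A program of length `k` for `y` and a program of length `l` for `x` given `y` together produce the
pair `(x, y)`. Given `(k, l)`, the set of pairs produced in this way can be enumerated and has at
most `2 ^ (k + l)` elements. If about `2 ^ j` of them have first component `x`, then `y` is
determined by `x` and an index of `j + 1` bits in the enumeration of these pairs. Moreover at most
`2 ^ (k + l - j)` first components occur that often and they can be enumerated too, so `x` is
determined by an index of `k + l - j` bits. Hence `C(x) + C(y|x) ≤ C(y) + C(x|y)` up to the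
`O(log n)` bits needed to specify `k`, `l` and `j`; exchanging `x` and `y` gives the other
direction.
-/

open Encodable
open Nat.Partrec (Code)

section Enumerations

variable {α β : Type*}

/-- The distinct values of the enumeration `e` at stages below `n`, the most recent one first.
A stage `i` with `e i = none` outputs nothing. -/
def enumList [DecidableEq β] (e : ℕ → Option β) (n : ℕ) : List β :=
  n.rec [] fun i l => (e i).elim l l.insert

section

variable [DecidableEq β] {e : ℕ → Option β}

theorem enumList_succ (e : ℕ → Option β) (n : ℕ) :
    enumList e (n + 1) = (e n).elim (enumList e n) (enumList e n).insert :=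
  rfl

theorem nodup_enumList (e : ℕ → Option β) (n : ℕ) : (enumList e n).Nodup := by
  induction n with
  | zero => exact List.nodup_nil
  | succ n ih =>
    rw [enumList_succ]
    cases e n with
    | none => exact ih
    | some b => exact ih.insert

theorem enumList_suffix {m n : ℕ} (h : m ≤ n) : enumList e m <:+ enumList e n := by
  induction h with
  | refl => exact List.suffix_rfl
  | @step n _ ih =>
    refine ih.trans ?_
    rw [enumList_succ]
    cases e n with
    | none => exact List.suffix_rfl
    | some b => exact List.suffix_insert b _

theorem mem_enumList {n : ℕ} {b : β} : b ∈ enumList e n ↔ ∃ i < n, e i = some b := by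
  induction n with
  | zero => simp [enumList]
  | succ n ih =>
    have hstep : b ∈ enumList e (n + 1) ↔ b ∈ enumList e n ∨ e n = some b := by
      rw [enumList_succ]
      cases e n with
      | none => simp
      | some b' => simp [or_comm, eq_comm]
    simp only [hstep, ih, Nat.lt_succ_iff_lt_or_eq, or_and_right, exists_or, exists_eq_left]

theorem length_enumList_le_encard (e : ℕ → Option β) (n : ℕ) :
    (enumList e n).length ≤ {b | ∃ i, e i = some b}.encard := by
  rw [← List.toFinset_card_of_nodup (nodup_enumList e n), ← Set.encard_coe_eq_coe_finsetCard]
  refine Set.encard_le_encard fun b hb => ?_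
  obtain ⟨i, -, hi⟩ := mem_enumList.1 (List.mem_toFinset.1 hb)
  exact ⟨i, hi⟩

theorem natCast_le_encard_iff_exists_le_length_enumList {N : ℕ} :
    N ≤ {b | ∃ i, e i = some b}.encard ↔ ∃ n, N ≤ (enumList e n).length := by
  refine ⟨fun hN => ?_, fun ⟨n, hn⟩ =>
    (Nat.cast_le.2 hn).trans (length_enumList_le_encard e n)⟩
  obtain ⟨t, ht, htN⟩ := Set.exists_subset_encard_eq hN
  lift t to Finset β using Set.finite_of_encard_eq_coe htN
  choose! stage hstage using fun b (hb : b ∈ t) => ht hb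
  have hsub : t ⊆ (enumList e (t.sup stage + 1)).toFinset := fun b hb =>
    List.mem_toFinset.2 (mem_enumList.2
      ⟨stage b, Nat.lt_succ_of_le (Finset.le_sup hb), hstage b hb⟩)
  refine ⟨t.sup stage + 1, ?_⟩
  rw [Set.encard_coe_eq_coe_finsetCard, Nat.cast_inj] at htN
  exact htN ▸ (Finset.card_le_card hsub).trans (List.toFinset_card_le _)

theorem computable₂_insert [Primcodable β] :
    Computable₂ fun (l : List β) (b : β) => l.insert b := by
  have hmem : Computable fun q : List β × β => decide (q.2 ∈ q.1) :=
    (PrimrecRel.exists_mem_list Primrec.eq).decide.to_comp.of_eq fun q => by simp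
  exact (Computable.cond hmem .fst (Computable.list_cons.comp .snd .fst)).of_eq
    fun q => by simp only [Bool.cond_decide, List.insert_eq]

theorem computable₂_enumList [Primcodable α] [Primcodable β] {e : α → ℕ → Option β}
    (he : Computable₂ e) : Computable₂ fun a n => enumList (e a) n := by
  have hinsert : Computable₂ fun (r : (α × ℕ) × ℕ × List β) b => r.2.2.insert b :=
    computable₂_insert.comp ((Computable.snd.comp .snd).comp .fst) .snd
  have hstep : Computable₂ fun (q : α × ℕ) (r : ℕ × List β) =>
      (e q.1 r.1).elim r.2 r.2.insert :=
    (Computable.option_casesOn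
      (he.comp (Computable.fst.comp .fst) (Computable.fst.comp .snd))
      (Computable.snd.comp .snd) hinsert).of_eq
      fun r => by dsimp only; cases e r.1.1 r.2.1 <;> rfl
  exact Computable.nat_rec .snd (.const []) hstep

end

variable {γ : Type*} [Primcodable α] [Primcodable β] [Primcodable γ] {R : α → β → Prop}

theorem rePred_comp {p : β → Prop} (hp : REPred p) {f : α → β} (hf : Computable f) :
    REPred fun a => p (f a) :=
  Partrec.comp hp hf

theorem rePred_iff_exists_computable {p : α → Prop} :
    REPred p ↔ ∃ t : α → ℕ → Bool, Computable₂ t ∧ ∀ a, p a ↔ ∃ n, t a n = true := by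
  constructor
  · intro hp
    obtain ⟨c, hc⟩ := Code.exists_code.1 hp
    refine ⟨fun a n => (Code.evaln n c (encode a)).isSome,
      Primrec.option_isSome.to_comp.comp (Code.primrec_evaln.to_comp.comp
        ((Computable.snd.pair (.const c)).pair (Computable.encode.comp .fst))), fun a => ?_⟩
    have heval : p a ↔ (Code.eval c (encode a)).Dom := by simp [hc, Part.assert]
    simp only [heval, Part.dom_iff_mem, Code.evaln_complete, Option.isSome_iff_exists,
      Option.mem_def]
    exact exists_comm
  · rintro ⟨t, ht, hpt⟩
    have hdom := (Partrec.rfind (p := fun a n => Part.some (t a n)) ht.partrec₂).dom_re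
    refine hdom.of_eq fun a => Part.dom_iff_mem.trans ?_
    rw [hpt]
    constructor
    · rintro ⟨n, hn⟩
      exact ⟨n, (Part.mem_some_iff.1 (Nat.rfind_spec hn)).symm⟩
    · rintro ⟨n, hn⟩
      obtain ⟨m, hm, -⟩ := Nat.rfind_min' (p := t a) hn
      exact ⟨m, hm⟩

theorem exists_computable_enum (hR : REPred fun q : α × β => R q.1 q.2) :
    ∃ e : α → ℕ → Option β, Computable₂ e ∧ ∀ a b, R a b ↔ ∃ n, e a n = some b := by
  obtain ⟨t, ht, hRt⟩ := rePred_iff_exists_computable.1 hR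
  refine ⟨fun a n => (decode n.unpair.2 : Option β).bind fun b =>
    bif t (a, b) n.unpair.1 then some b else none, ?_, fun a b => ?_⟩
  · have hunpair : Computable fun q : α × ℕ => q.2.unpair := Computable.unpair.comp .snd
    refine .option_bind (Computable.decode.comp (Computable.snd.comp hunpair)) (.cond ?_ ?_ ?_)
    · exact ht.comp ((Computable.fst.comp .fst).pair .snd)
        (Computable.fst.comp (hunpair.comp .fst))
    · exact Computable.option_some.comp .snd
    · exact .const none
  · simp only [hRt (a, b), Option.bind_eq_some_iff, Bool.cond_eq_ite]
    constructor
    · rintro ⟨n, hn⟩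
      exact ⟨Nat.pair n (encode b), b, by simp, by simp [hn]⟩
    · rintro ⟨n, b', -, hb'⟩
      obtain ⟨ht', rfl⟩ : t (a, b') n.unpair.1 = true ∧ b' = b := by simpa using hb'
      exact ⟨_, ht'⟩

theorem rePred_exists (hR : REPred fun q : α × β => R q.1 q.2) :
    REPred fun a => ∃ b, R a b := by
  obtain ⟨e, he, hRe⟩ := exists_computable_enum hR
  refine rePred_iff_exists_computable.2
    ⟨fun a n => (e a n).isSome, Primrec.option_isSome.to_comp.comp he, fun a => ?_⟩
  simp only [hRe, Option.isSome_iff_exists]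
  exact exists_comm

theorem rePred_mem {f : α →. β} (hf : Partrec f) : REPred fun q : α × β => q.2 ∈ f q.1 := by
  have hguard : Partrec fun q : α × β => (f q.1).bind fun b =>
      ((bif decide (b = q.2) then some () else none : Option Unit) : Part Unit) :=
    (hf.comp .fst).bind (Computable.ofOption (.cond
      (Primrec.eq.decide.to_comp.comp .snd (Computable.snd.comp .fst)) (.const _) (.const _)))
  refine hguard.dom_re.of_eq fun q => ?_
  simp [Part.dom_iff_mem, Bool.cond_eq_ite]

theorem rePred_exists_mem {f : α →. β} (hf : Partrec f) : REPred fun b => ∃ a, b ∈ f a :=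
  rePred_exists (R := fun b a => b ∈ f a) (rePred_comp (rePred_mem hf) (Computable.snd.pair .fst))

theorem exists_partrec_enum (hR : REPred fun q : α × β => R q.1 q.2) :
    ∃ f : α → ℕ →. β, Partrec₂ f ∧
      ∀ a b (N : ℕ), R a b → {b | R a b}.encard ≤ N → ∃ i < N, b ∈ f a i := by
  obtain ⟨e, he, hRe⟩ := exists_computable_enum hR
  have hlist := computable₂_enumList he
  refine ⟨fun a i => Nat.rfindOpt fun n => (enumList (e a) n).reverse[i]?,
    Partrec.rfindOpt (Computable.list_getElem?.comp (Computable.list_reverse.comp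
      (hlist.comp (Computable.fst.comp .fst) .snd)) (Computable.snd.comp .fst)),
    fun a b N hab hN => ?_⟩
  obtain ⟨n, hn⟩ := (hRe a b).1 hab
  obtain ⟨i, hi, hib⟩ := List.mem_iff_getElem.1
    (List.mem_reverse.2 (mem_enumList.2 ⟨n, Nat.lt_succ_self n, hn⟩))
  have hlen : (enumList (e a) (n + 1)).reverse.length ≤ N := by
    simp only [hRe] at hN
    rw [List.length_reverse]
    exact_mod_cast (length_enumList_le_encard (e a) (n + 1)).trans hN
  refine ⟨i, hi.trans_le hlen, (Nat.rfindOpt_mono fun {b m n} hmn hb => ?_).2 ⟨n + 1, ?_⟩⟩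
  · obtain ⟨hi, rfl⟩ := List.getElem?_eq_some_iff.1 hb
    exact List.prefix_iff_getElem?.1 (List.reverse_prefix.2 (enumList_suffix hmn)) i hi
  · exact List.getElem?_eq_some_iff.2 ⟨hi, hib⟩

theorem computable_two_pow : Computable fun j : ℕ => 2 ^ j := by
  have hpow : Primrec₂ fun k j : ℕ => k ^ j := Primrec₂.unpaired'.1 Nat.Primrec.pow
  exact (hpow.comp (.const 2) .id).to_comp

theorem rePred_natCast_le_encard (hR : REPred fun q : α × β => R q.1 q.2) :
    REPred fun q : α × ℕ => q.2 ≤ {b | R q.1 b}.encard := by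
  obtain ⟨e, he, hRe⟩ := exists_computable_enum hR
  refine rePred_iff_exists_computable.2
    ⟨fun q n => decide (q.2 ≤ (enumList (e q.1) n).length), ?_, fun q => ?_⟩
  · exact Primrec.nat_le.decide.to_comp.comp (Computable.snd.comp .fst)
      (Computable.list_length.comp
        ((computable₂_enumList he).comp (Computable.fst.comp .fst) .snd))
  · simp only [hRe, natCast_le_encard_iff_exists_le_length_enumList, decide_eq_true_iff]

theorem rePred_section {S : α → β × γ → Prop} (hS : REPred fun q : α × β × γ => S q.1 q.2) :
    REPred fun q : (α × β) × γ => S q.1.1 (q.1.2, q.2) :=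
  rePred_comp hS ((Computable.fst.comp .fst).pair ((Computable.snd.comp .fst).pair .snd))

theorem rePred_two_pow_le_encard_section {S : α → β × γ → Prop}
    (hS : REPred fun q : α × β × γ => S q.1 q.2) :
    REPred fun q : (α × ℕ) × β => (2 ^ q.1.2 : ℕ) ≤ {c | S q.1.1 (q.2, c)}.encard := by
  have hargs : Computable fun q : (α × ℕ) × β => ((q.1.1, q.2), 2 ^ q.1.2) :=
    ((Computable.fst.comp .fst).pair .snd).pair
      (computable_two_pow.comp (Computable.snd.comp .fst))
  have hcard := rePred_natCast_le_encard (R := fun (q : α × β) c => S q.1 (q.2, c))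
    (rePred_section hS)
  exact (rePred_comp hcard hargs :)

end Enumerations

section Descriptions

/-- The inverse of `Nat.bits`: the number whose binary digits are given, least significant
first. -/
def ofBits (l : BStr) : ℕ := l.foldr Nat.bit 0

theorem ofBits_bits (n : ℕ) : ofBits n.bits = n := by
  induction n using Nat.binaryRec' with
  | zero => rfl
  | bit b n h ih => rw [Nat.bits_append_bit n b h, ofBits, List.foldr_cons, ← ofBits, ih]

theorem primrec_ofBits : Primrec ofBits :=
  Primrec.list_foldr Primrec.id (Primrec.const 0)
    (Primrec.cond (Primrec.fst.comp .snd)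
      (Primrec.nat_double_succ.comp (Primrec.snd.comp .snd))
      (Primrec.nat_double.comp (Primrec.snd.comp .snd))).to₂

/-- The string `1^|u| 0 u v`, a pairing of `u` and `v` costing only `|u| + 1` extra bits. -/
def pairStr (u v : BStr) : BStr := List.replicate u.length true ++ false :: (u ++ v)

/-- The decoder of `pairStr`: the number of leading ones is the length of the first component. -/
def unpairStr (p : BStr) : BStr × BStr :=
  let k := (p.takeWhile id).length
  ((p.drop (k + 1)).take k, (p.drop (k + 1)).drop k)

theorem length_pairStr (u v : BStr) : (pairStr u v).length = v.length + 2 * u.length + 1 := by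
  simp only [pairStr, List.length_append, List.length_replicate, List.length_cons]
  ring

theorem unpairStr_pairStr (u v : BStr) : unpairStr (pairStr u v) = (u, v) := by
  have hones : ((pairStr u v).takeWhile id).length = u.length := by
    rw [pairStr, List.takeWhile_append_of_pos] <;> simp
  have hrest : (pairStr u v).drop (u.length + 1) = u ++ v := by
    rw [pairStr, List.drop_append]
    simp
  simp only [unpairStr, hones, hrest, List.take_left, List.drop_left]

theorem primrec_unpairStr : Primrec unpairStr := by
  have hones : Primrec fun p : BStr => (p.takeWhile id).length :=
    Primrec.list_length.comp (Primrec.list_takeWhile Primrec.id)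
  have hrest : Primrec fun p : BStr => p.drop ((p.takeWhile id).length + 1) :=
    Primrec.list_drop.comp (Primrec.succ.comp hones) Primrec.id
  exact (Primrec.list_take.comp hones hrest).pair (Primrec.list_drop.comp hones hrest)

theorem exists_partrec_description {α β γ : Type*} [Primcodable α] [Primcodable β] [Primcodable γ]
    {R : α × γ → β → Prop} (hR : REPred fun q : (α × γ) × β => R q.1 q.2) :
    ∃ F : BStr → γ →. β, Partrec₂ F ∧ ∀ a y b (m : ℕ), R (a, y) b →
      {b | R (a, y) b}.encard ≤ (2 ^ m : ℕ) →
      ∃ p : BStr, p.length ≤ m + 2 * (encode a).size + 1 ∧ b ∈ F p y := by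
  obtain ⟨f, hf, hmem⟩ := exists_partrec_enum hR
  refine ⟨fun p y => (Part.ofOption (decode (ofBits (unpairStr p).1) : Option α)).bind
    fun a => f (a, y) (ofBits (unpairStr p).2), ?_, fun a y b m hb hm => ?_⟩
  · have hfst : Computable fun p : BStr => ofBits (unpairStr p).1 :=
      (primrec_ofBits.comp (Primrec.fst.comp primrec_unpairStr)).to_comp
    have hsnd : Computable fun p : BStr => ofBits (unpairStr p).2 :=
      (primrec_ofBits.comp (Primrec.snd.comp primrec_unpairStr)).to_comp
    exact (Computable.decode.comp (hfst.comp .fst)).ofOption.bind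
      (hf.comp (Computable.snd.pair (Computable.snd.comp .fst))
        (hsnd.comp (Computable.fst.comp .fst)))
  · obtain ⟨i, hi, hbi⟩ := hmem (a, y) b (2 ^ m) hb hm
    refine ⟨pairStr (encode a).bits i.bits, ?_, ?_⟩
    · rw [length_pairStr, Nat.size_eq_bits_len, Nat.size_eq_bits_len]
      have := Nat.size_le.2 hi
      omega
    · simpa only [unpairStr_pairStr, ofBits_bits, encodek, Part.coe_some, Part.bind_some] using hbi

end Descriptions

section Counting

variable {α β : Type*}

theorem natCast_mul_encard_le_encard (N : ℕ) (S : Set (α × β)) :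
    N * {x | N ≤ {y | (x, y) ∈ S}.encard}.encard ≤ S.encard := by
  rcases S.eq_empty_or_nonempty with rfl | ⟨⟨_, y⟩, -⟩
  · rcases eq_or_ne N 0 with rfl | hN
    · simp
    · simp [hN]
  have : Nonempty β := ⟨y⟩
  have hIio : (Set.Iio N).encard = N := by
    rw [← Finset.coe_Iio, Set.encard_coe_eq_coe_finsetCard, Nat.card_Iio]
  have hinj : ∀ x, N ≤ {y | (x, y) ∈ S}.encard →
      ∃ f : ℕ → β, (∀ i < N, (x, f i) ∈ S) ∧ Set.InjOn f (Set.Iio N) := fun x hx => by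
    rw [← hIio] at hx
    exact (Set.finite_Iio N).exists_injOn_of_encard_le hx
  choose! f hfS hf using hinj
  calc N * {x | N ≤ {y | (x, y) ∈ S}.encard}.encard
      = ({x | N ≤ {y | (x, y) ∈ S}.encard} ×ˢ Set.Iio N).encard := by
        rw [Set.encard_prod, hIio, mul_comm]
    _ ≤ S.encard := by
        refine Set.encard_le_encard_of_injOn (f := fun q => (q.1, f q.1 q.2))
          (fun q hq => hfS q.1 hq.1 q.2 hq.2) ?_
        rintro ⟨x, i⟩ ⟨hx, hi⟩ ⟨x', j⟩ ⟨-, hj⟩ hij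
        obtain ⟨rfl, hij⟩ := Prod.mk.inj hij
        exact congrArg (x, ·) (hf x hx hi hj hij)

theorem encard_setOf_two_pow_le_encard_le {S : Set (α × β)} {j m : ℕ} (hjm : j ≤ m)
    (hS : S.encard ≤ (2 ^ m : ℕ)) :
    {x | (2 ^ j : ℕ) ≤ {y | (x, y) ∈ S}.encard}.encard ≤ (2 ^ (m - j) : ℕ) := by
  have hmul := (natCast_mul_encard_le_encard (2 ^ j) S).trans hS
  rw [← Nat.add_sub_cancel' hjm, pow_add, Nat.cast_mul] at hmul
  exact (ENat.mul_le_mul_left_iff (by simp) (ENat.natCast_ne_top _)).1 hmul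

theorem exists_two_pow_le_encard_lt {A : Set β} (hne : A.Nonempty) (hfin : A.Finite) :
    ∃ j : ℕ, (2 ^ j : ℕ) ≤ A.encard ∧ A.encard < (2 ^ (j + 1) : ℕ) := by
  refine ⟨Nat.log 2 A.ncard, ?_⟩
  rw [← hfin.cast_ncard_eq, Nat.cast_le, Nat.cast_lt]
  exact ⟨Nat.pow_log_le_self 2 (Set.ncard_ne_zero_of_mem hne.some_mem hfin),
    Nat.lt_pow_succ_log_self one_lt_two _⟩

theorem encard_le_encard_of_forall_exists_mem {A : Set β} {B : Set α} {P : α → β → Prop}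
    (h : ∀ z ∈ A, ∃ r ∈ B, P r z) (hP : ∀ r, ∀ z ∈ A, ∀ z' ∈ A, P r z → P r z' → z = z') :
    A.encard ≤ B.encard := by
  rcases A.eq_empty_or_nonempty with rfl | ⟨z, hz⟩
  · simp
  have : Nonempty α := ⟨(h z hz).choose⟩
  choose! g hgB hg using h
  exact Set.encard_le_encard_of_injOn hgB fun z hz z' hz' hzz' =>
    hP (g z) z hz z' hz' (hg z hz) (hzz' ▸ hg z' hz')

theorem encard_setOf_length_eq [Fintype α] (k : ℕ) :
    {p : List α | p.length = k}.encard = (Fintype.card α ^ k : ℕ) := by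
  rw [← card_vector, ← ENat.card_eq_coe_fintype_card]
  rfl

end Counting

section Complexity

variable {D D' : BStr →. BStr} {E E' : BStr → BStr →. BStr}

theorem Cw_le_of_mem {x p : BStr} (h : x ∈ D p) : Cw D x ≤ p.length :=
  iInf₂_le p h

theorem exists_mem_length_eq_C {x : BStr} (h : Cw D x ≠ ⊤) :
    ∃ p, x ∈ D p ∧ p.length = C D x := by
  have hCw : Cw D x = ⨅ p : {p // x ∈ D p}, (p.1.length : ℕ∞) := iInf_subtype'
  have : Nonempty {p // x ∈ D p} := ENat.iInf_natCast_ne_top.1 (hCw ▸ h)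
  obtain ⟨⟨p, hp⟩, hmin⟩ := ENat.exists_eq_iInf fun p : {p // x ∈ D p} => (p.1.length : ℕ∞)
  exact ⟨p, hp, by rw [C, hCw, ← hmin, ENat.toNat_natCast]⟩

theorem Cw_ne_top_and_C_le {x p : BStr} {c : ℕ} (h : Cw D x ≤ Cw D' x + c) (hp : x ∈ D' p) :
    Cw D x ≠ ⊤ ∧ C D x ≤ p.length + c := by
  have hle : Cw D x ≤ (p.length + c : ℕ) := h.trans (add_le_add_left (Cw_le_of_mem hp) _)
  exact ⟨ne_top_of_le_ne_top (ENat.natCast_ne_top _) hle, ENat.toNat_le_of_le_natCast hle⟩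

theorem exists_C_le_of_mem (hD : OptimalDM D) (hD' : Partrec D') :
    ∃ c : ℕ, ∀ x p, x ∈ D' p → Cw D x ≠ ⊤ ∧ C D x ≤ p.length + c :=
  (hD.2 D' hD').imp fun _ hc x _ hp => Cw_ne_top_and_C_le (hc x) hp

theorem exists_Ccond_le_of_mem (hE : OptimalCDM E) (hE' : Partrec₂ E') :
    ∃ c : ℕ, ∀ x y p, x ∈ E' p y → CwCond E x y ≠ ⊤ ∧ Ccond E x y ≤ p.length + c :=
  (hE.2 E' hE').imp fun _ hc x y _ hp =>
    Cw_ne_top_and_C_le (D := fun p => E p y) (D' := fun p => E' p y) (hc x y) hp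

theorem exists_C_le_length (hD : OptimalDM D) :
    ∃ c : ℕ, ∀ x, Cw D x ≠ ⊤ ∧ C D x ≤ x.length + c :=
  (exists_C_le_of_mem hD Partrec.some).imp fun _ hc x => hc x x (Part.mem_some x)

theorem exists_Ccond_le_C (hD : OptimalDM D) (hE : OptimalCDM E) :
    ∃ c : ℕ, ∀ x y, CwCond E x y ≠ ⊤ ∧ Ccond E x y ≤ C D x + c := by
  obtain ⟨_, hfin⟩ := exists_C_le_length hD
  obtain ⟨c, hc⟩ := exists_Ccond_le_of_mem hE (E' := fun p _ => D p) (hD.1.comp .fst)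
  refine ⟨c, fun x y => ?_⟩
  obtain ⟨p, hp, hlen⟩ := exists_mem_length_eq_C (hfin x).1
  exact hlen ▸ hc x y p hp

variable {α : Type*} [Primcodable α]

theorem exists_C_le_of_encard_le (hD : OptimalDM D) {R : α → BStr → Prop}
    (hR : REPred fun q : α × BStr => R q.1 q.2) :
    ∃ c : ℕ, ∀ a x (m : ℕ), R a x → {x | R a x}.encard ≤ (2 ^ m : ℕ) →
      C D x ≤ m + 2 * (encode a).size + c := by
  obtain ⟨F, hF, hdesc⟩ := exists_partrec_description (R := fun (q : α × Unit) x => R q.1 x)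
    (rePred_comp hR ((Computable.fst.comp .fst).pair .snd))
  obtain ⟨c, hc⟩ := exists_C_le_of_mem hD (D' := fun p => F p ())
    (hF.comp .id (.const ()))
  refine ⟨1 + c, fun a x m hx hm => ?_⟩
  obtain ⟨p, hlen, hp⟩ := hdesc a () x m hx hm
  have := (hc x p hp).2
  omega

theorem exists_Ccond_le_of_encard_le (hE : OptimalCDM E) {R : α × BStr → BStr → Prop}
    (hR : REPred fun q : (α × BStr) × BStr => R q.1 q.2) :
    ∃ c : ℕ, ∀ a x y (m : ℕ), R (a, y) x → {x | R (a, y) x}.encard ≤ (2 ^ m : ℕ) →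
      Ccond E x y ≤ m + 2 * (encode a).size + c := by
  obtain ⟨F, hF, hdesc⟩ := exists_partrec_description hR
  obtain ⟨c, hc⟩ := exists_Ccond_le_of_mem hE hF
  refine ⟨1 + c, fun a x y m hx hm => ?_⟩
  obtain ⟨p, hlen, hp⟩ := hdesc a y x m hx hm
  have := (hc x y p hp).2
  omega

end Complexity

section BinaryLength

theorem size_pair_le {a b s : ℕ} (ha : a.size ≤ s) (hb : b.size ≤ s) :
    (Nat.pair a b).size ≤ 2 * s := by
  rw [Nat.size_le] at *
  calc Nat.pair a b < (max a b + 1) ^ 2 := Nat.pair_lt_max_add_one_sq a b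
    _ ≤ (2 ^ s) ^ 2 := Nat.pow_le_pow_left (max_lt ha hb) 2
    _ = 2 ^ (2 * s) := by rw [← pow_mul, mul_comm]

theorem one_le_logb_two_add_two (n : ℕ) : 1 ≤ Real.logb 2 ((n : ℝ) + 2) := by
  rw [Real.le_logb_iff_rpow_le one_lt_two (by positivity), Real.rpow_one]
  linarith [n.cast_nonneg (α := ℝ)]

theorem size_le_logb_add_one (m : ℕ) : (m.size : ℝ) ≤ Real.logb 2 m + 1 := by
  have hsize : m.size ≤ Nat.log 2 m + 1 := Nat.size_le.2 (Nat.lt_pow_succ_log_self one_lt_two m)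
  calc (m.size : ℝ) ≤ Nat.log 2 m + 1 := mod_cast hsize
    _ ≤ Real.logb 2 m + 1 := add_le_add_left (mod_cast Real.natLog_le_logb m 2) 1

theorem size_two_mul_add_le (n d : ℕ) :
    ((2 * n + d).size : ℝ) ≤ (d + 3) * Real.logb 2 ((n : ℝ) + 2) := by
  have hle : 2 * n + d ≤ (n + 2) <<< (d + 1) := by
    have hd : d + 1 ≤ 2 ^ d := d.lt_two_pow_self
    rw [Nat.shiftLeft_eq, pow_succ]
    nlinarith
  have hsize : (2 * n + d).size ≤ (n + 2).size + (d + 1) :=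
    (Nat.size_le_size hle).trans_eq (Nat.size_shiftLeft (by omega) _)
  have hlog : ((n + 2).size : ℝ) ≤ Real.logb 2 ((n : ℝ) + 2) + 1 := mod_cast
    size_le_logb_add_one (n + 2)
  calc ((2 * n + d).size : ℝ) ≤ (n + 2).size + (d + 1) := mod_cast hsize
    _ ≤ Real.logb 2 ((n : ℝ) + 2) + (d + 2) * 1 := by linarith
    _ ≤ Real.logb 2 ((n : ℝ) + 2) + (d + 2) * Real.logb 2 ((n : ℝ) + 2) := by
        gcongr
        exact one_le_logb_two_add_two n
    _ = (d + 3) * Real.logb 2 ((n : ℝ) + 2) := by ring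

end BinaryLength

section SymmetryOfInformation

variable {D : BStr →. BStr} {E : BStr → BStr →. BStr}

theorem exists_C_add_Ccond_le_of_encard_le {α : Type*} [Primcodable α] (hD : OptimalDM D)
    (hE : OptimalCDM E) {R : α → BStr × BStr → Prop}
    (hR : REPred fun q : α × BStr × BStr => R q.1 q.2) :
    ∃ c : ℕ, ∀ a x y (m : ℕ), R a (x, y) → {z | R a z}.encard ≤ (2 ^ m : ℕ) →
      C D x + Ccond E y x ≤ m + 4 * (encode (a, m)).size + c := by
  obtain ⟨c₁, hc₁⟩ := exists_C_le_of_encard_le hD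
    (R := fun (q : α × ℕ) x => (2 ^ q.2 : ℕ) ≤ {y | R q.1 (x, y)}.encard)
    (rePred_two_pow_le_encard_section hR)
  obtain ⟨c₂, hc₂⟩ := exists_Ccond_le_of_encard_le hE
    (R := fun (q : α × BStr) y => R q.1 (q.2, y)) (rePred_section hR)
  refine ⟨c₁ + c₂ + 1, fun a x y m hxy hm => ?_⟩
  have hle : {y | R a (x, y)}.encard ≤ (2 ^ m : ℕ) :=
    (Set.encard_le_encard_of_injOn (f := Prod.mk x) (fun _ h => h)
      (Prod.mk_right_injective x).injOn).trans hm
  obtain ⟨j, hj, hj'⟩ := exists_two_pow_le_encard_lt ⟨y, hxy⟩ (Set.finite_of_encard_le_coe hle)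
  have hjm : j ≤ m := (Nat.pow_le_pow_iff_right one_lt_two).1 (Nat.cast_le.1 (hj.trans hle))
  have hcount : {x | (2 ^ j : ℕ) ≤ {y | R a (x, y)}.encard}.encard ≤ (2 ^ (m - j) : ℕ) :=
    encard_setOf_two_pow_le_encard_le hjm hm
  have hC : C D x ≤ m - j + 2 * (encode (a, j)).size + c₁ := hc₁ (a, j) x (m - j) hj hcount
  have hCcond : Ccond E y x ≤ j + 1 + 2 * (encode a).size + c₂ := hc₂ a y x (j + 1) hxy hj'.le
  have haj : (encode (a, j)).size ≤ (encode (a, m)).size :=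
    Nat.size_le_size (StrictMono.monotone (fun _ _ => Nat.pair_lt_pair_right (encode a)) hjm)
  have ha : (encode a).size ≤ (encode (a, m)).size :=
    Nat.size_le_size (Nat.left_le_pair _ _)
  omega

/-- The programs `p` for `y` and `q` for `x` given `y` together determine `x` and `y`; this maps
`(p, q)` to `(x, y)`, tagged with the lengths of the two programs. -/
def pairOutput (D : BStr →. BStr) (E : BStr → BStr →. BStr) :
    BStr × BStr →. (ℕ × ℕ) × BStr × BStr :=
  fun r => (D r.1).bind fun y => (E r.2 y).map fun x => ((r.1.length, r.2.length), x, y)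

theorem partrec_pairOutput (hD : Partrec D) (hE : Partrec₂ E) : Partrec (pairOutput D E) := by
  have hlen : Computable fun r : BStr × BStr => (r.1.length, r.2.length) :=
    (Computable.list_length.comp .fst).pair (Computable.list_length.comp .snd)
  exact (hD.comp .fst).bind ((hE.comp (Computable.snd.comp .fst) .snd).map
    ((hlen.comp (Computable.fst.comp .fst)).pair (Computable.snd.pair (Computable.snd.comp .fst))))

theorem mem_pairOutput {k l : ℕ} {x y p q : BStr} :
    ((k, l), x, y) ∈ pairOutput D E (p, q) ↔
      p.length = k ∧ q.length = l ∧ y ∈ D p ∧ x ∈ E q y := by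
  simp only [pairOutput, Part.mem_bind_iff, Part.mem_map_iff, Prod.mk.injEq]
  aesop

theorem encard_pairOutput_le (D : BStr →. BStr) (E : BStr → BStr →. BStr) (k l : ℕ) :
    {z | ∃ r, ((k, l), z) ∈ pairOutput D E r}.encard ≤ (2 ^ (k + l) : ℕ) := by
  calc {z | ∃ r, ((k, l), z) ∈ pairOutput D E r}.encard
      ≤ ({p : BStr | p.length = k} ×ˢ {q : BStr | q.length = l}).encard :=
        encard_le_encard_of_forall_exists_mem
          (P := fun r z => ((k, l), z) ∈ pairOutput D E r)
          (fun _ ⟨r, hr⟩ => ⟨r, ⟨(mem_pairOutput.1 hr).1, (mem_pairOutput.1 hr).2.1⟩, hr⟩)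
          (fun _ _ _ _ _ h h' => (Prod.mk.inj (Part.mem_unique h h')).2)
    _ = (2 ^ (k + l) : ℕ) := by
        rw [Set.encard_prod, encard_setOf_length_eq, encard_setOf_length_eq, Fintype.card_bool,
          ← Nat.cast_mul, pow_add]

theorem exists_C_add_Ccond_le (hD : OptimalDM D) (hE : OptimalCDM E) :
    ∃ c : ℕ, ∀ x y, C D x + Ccond E y x ≤
      C D y + Ccond E x y + 16 * (C D y + Ccond E x y).size + c := by
  have hR : REPred fun q : (ℕ × ℕ) × BStr × BStr => ∃ r, q ∈ pairOutput D E r :=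
    rePred_exists_mem (partrec_pairOutput hD.1 hE.1)
  obtain ⟨c, hc⟩ := exists_C_add_Ccond_le_of_encard_le hD hE
    (R := fun a z => ∃ r, (a, z) ∈ pairOutput D E r) hR
  obtain ⟨_, hfin⟩ := exists_C_le_length hD
  obtain ⟨_, hfinCond⟩ := exists_Ccond_le_C hD hE
  refine ⟨c, fun x y => ?_⟩
  set k := C D y
  set l := Ccond E x y
  obtain ⟨p, hp, hplen⟩ := exists_mem_length_eq_C (hfin y).1
  obtain ⟨q, hq, hqlen⟩ :=
    exists_mem_length_eq_C (D := fun q => E q y) (hfinCond x y).1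
  have hxy := hc (k, l) x y (k + l)
    ⟨(p, q), mem_pairOutput.2 ⟨hplen, hqlen, hp, hq⟩⟩ (encard_pairOutput_le D E k l)
  have hsize : (encode ((k, l), k + l)).size ≤ 2 * (2 * (k + l).size) :=
    size_pair_le (size_pair_le (Nat.size_le_size (Nat.le_add_right k l))
      (Nat.size_le_size (Nat.le_add_left l k))) (Nat.le_mul_of_pos_left _ two_pos)
  omega

end SymmetryOfInformation

theorem stmt3_general (D : BStr →. BStr) (hD : OptimalDM D)
    (E : BStr → BStr →. BStr) (hE : OptimalCDM E) :
    ∃ c : ℝ, ∀ n : ℕ, ∀ x y : BStr, x.length ≤ n → C D y ≤ n →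
      |((C D y : ℝ) + Ccond E x y) - (C D x + Ccond E y x)| ≤ c * Real.logb 2 ((n : ℝ) + 2) := by
  obtain ⟨c₀, hsymm⟩ := exists_C_add_Ccond_le hD hE
  obtain ⟨c₁, hlen⟩ := exists_C_le_length hD
  obtain ⟨c₂, hcond⟩ := exists_Ccond_le_C hD hE
  refine ⟨16 * ((2 * c₁ + c₂ : ℕ) + 3) + c₀, fun n x y hx hy => ?_⟩
  have hCx : C D x ≤ n + c₁ := (hlen x).2.trans (by omega)
  have hsize : ∀ m ≤ 2 * n + (2 * c₁ + c₂), (m.size : ℝ) ≤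
      ((2 * c₁ + c₂ : ℕ) + 3) * Real.logb 2 ((n : ℝ) + 2) := fun m hm =>
    (Nat.cast_le.2 (Nat.size_le_size hm)).trans (size_two_mul_add_le n _)
  have hyx := hsize (C D y + Ccond E x y) (by have := (hcond x y).2; omega)
  have hxy := hsize (C D x + Ccond E y x) (by have := (hcond y x).2; omega)
  have hle : (C D x : ℝ) + Ccond E y x ≤
    C D y + Ccond E x y + 16 * (C D y + Ccond E x y).size + c₀ := mod_cast hsymm x y
  have hge : (C D y : ℝ) + Ccond E x y ≤
    C D x + Ccond E y x + 16 * (C D x + Ccond E y x).size + c₀ := mod_cast hsymm y x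
  have hc₀ : (c₀ : ℝ) ≤ c₀ * Real.logb 2 ((n : ℝ) + 2) :=
    le_mul_of_one_le_right c₀.cast_nonneg (one_le_logb_two_add_two n)
  rw [abs_le]
  constructor <;> linarith

/-- The optimality deficiency exceeds the randomness deficiency by `C(S|x)`,
up to `O(log n)`. -/
theorem stmt3 (D : BStr →. BStr) (hD : OptimalDM D)
    (E : BStr → BStr →. BStr) (hE : OptimalCDM E)
    (enc : Finset BStr → BStr) (henc : SetEncoding enc) :
    ∃ c : ℝ, ∀ n : ℕ, ∀ x : BStr, x.length ≤ n →
      ∀ S : Finset BStr, x ∈ S → C D (enc S) ≤ n → S.card ≤ 2 ^ n →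
      |(((C D (enc S) : ℝ) + Real.logb 2 (S.card : ℝ) - (C D x : ℝ))
          - (Real.logb 2 (S.card : ℝ) - (Ccond E x (enc S) : ℝ))
          - (Ccond E (enc S) x : ℝ))|
        ≤ c * Real.logb 2 ((n : ℝ) + 2) := by
  obtain ⟨c, hc⟩ := stmt3_general D hD E hE
  exact ⟨c, fun n x hx S _ hS _ => by convert hc n x (enc S) hx hS using 2; ring⟩
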